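/- Let (X,d) be a complete CAT(0) space such that every finite set S ⊆ X has finite threading degree deg_thr S. Then for every compact set K ⊆ X, the closure of its convex hull cl co K is compact. -/

import Mathlib

/-!
For a finite set `S`, the hull `co S` is totally bounded: it equals some iterate `thrⁿ S`, and
threading preserves total boundedness (`thr_totallyBounded`). A compact `K` lies in the
`ε`-neighbourhood of a finite set `S`. In a CAT(0) space `ε`-neighbourhoods of convex sets are
convex (`gconvex_thickening`), so `co K` lies in the `ε`-neighbourhood of `co S`. Hence `co K` is
totally bounded, and by completeness its closure is compact.

Both facts about `ε`-neighbourhoods come from the convexity of the metric of a CAT(0) space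
(`IsGeodesic.dist_le`): `d(x_t, x'_t) ≤ (1 - t) d(x, x') + t d(y, y')` for geodesics `[x, y]` and
`[x', y']`.
-/

open Set

/-- A geodesic from `x` to `y`: an isometric parametrization of `[0, d(x,y)]`. -/
def IsGeodesic {X : Type*} [MetricSpace X] (x y : X) (γ : ℝ → X) : Prop :=
  γ 0 = x ∧ γ (dist x y) = y ∧
    ∀ s ∈ Set.Icc (0 : ℝ) (dist x y), ∀ t ∈ Set.Icc (0 : ℝ) (dist x y),
      dist (γ s) (γ t) = |s - t|

/-- The union of all geodesic segments from `x` to `y` (in a uniquely geodesic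
space this is the geodesic segment `[x,y]`). -/
def segs {X : Type*} [MetricSpace X] (x y : X) : Set X :=
  ⋃ γ ∈ {γ : ℝ → X | IsGeodesic x y γ}, γ '' Set.Icc (0 : ℝ) (dist x y)

/-- A geodesic metric space: every two points are joined by a geodesic. -/
def GeodesicSpace (X : Type*) [MetricSpace X] : Prop :=
  ∀ x y : X, ∃ γ : ℝ → X, IsGeodesic x y γ

/-- A uniquely geodesic metric space. -/
def UniquelyGeodesic (X : Type*) [MetricSpace X] : Prop :=
  GeodesicSpace X ∧ ∀ (x y : X) (γ₁ γ₂ : ℝ → X), IsGeodesic x y γ₁ → IsGeodesic x y γ₂ →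
    Set.EqOn γ₁ γ₂ (Set.Icc (0 : ℝ) (dist x y))

/-- A CAT(0) space: a geodesic space satisfying the quadratic comparison inequality. -/
def CAT0 (X : Type*) [MetricSpace X] : Prop :=
  GeodesicSpace X ∧
    ∀ (x y z : X) (γ : ℝ → X), IsGeodesic x y γ → ∀ t ∈ Set.Icc (0 : ℝ) 1,
      dist (γ (t * dist x y)) z ^ 2 ≤
        (1 - t) * dist x z ^ 2 + t * dist y z ^ 2 - t * (1 - t) * dist x y ^ 2

/-- A flat CAT(0) space: the comparison inequality holds with equality. -/
def FlatCAT0 (X : Type*) [MetricSpace X] : Prop :=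
  GeodesicSpace X ∧
    ∀ (x y z : X) (γ : ℝ → X), IsGeodesic x y γ → ∀ t ∈ Set.Icc (0 : ℝ) 1,
      dist (γ (t * dist x y)) z ^ 2 =
        (1 - t) * dist x z ^ 2 + t * dist y z ^ 2 - t * (1 - t) * dist x y ^ 2

/-- Convexity: a set containing every geodesic segment between its points. -/
def GConvex {X : Type*} [MetricSpace X] (C : Set X) : Prop :=
  ∀ x ∈ C, ∀ y ∈ C, segs x y ⊆ C

/-- The (geodesic) convex hull: the smallest convex set containing `S`. -/
def gconvHull {X : Type*} [MetricSpace X] (S : Set X) : Set X :=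
  ⋂₀ {C : Set X | GConvex C ∧ S ⊆ C}

/-- Threading of a set: the union of all geodesic segments with endpoints in `S`. -/
def thr {X : Type*} [MetricSpace X] (S : Set X) : Set X :=
  ⋃ x ∈ S, ⋃ y ∈ S, segs x y

/-- The threading degree of a set: the smallest `n` with `thrⁿ S = co S` (or `⊤`). -/
noncomputable def thrDeg {X : Type*} [MetricSpace X] (S : Set X) : ℕ∞ :=
  sInf ((fun n : ℕ => (n : ℕ∞)) '' {n : ℕ | thr^[n] S = gconvHull S})

/-- The threading degree of the space: the supremum of the threading degrees of its subsets. -/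
noncomputable def thrDegSpace (X : Type*) [MetricSpace X] : ℕ∞ :=
  ⨆ S : Set X, thrDeg S

/-- A space is of finite type if its threading degree is finite. -/
def FiniteType (X : Type*) [MetricSpace X] : Prop := thrDegSpace X < ⊤

section CAT0Hull

variable {X : Type*} [MetricSpace X]

lemma mul_mem_Icc_dist {t : ℝ} (ht : t ∈ Icc (0 : ℝ) 1) (x y : X) :
    t * dist x y ∈ Icc (0 : ℝ) (dist x y) :=
  ⟨mul_nonneg ht.1 dist_nonneg, mul_le_of_le_one_left dist_nonneg ht.2⟩

lemma IsGeodesic.dist_left {x y : X} {γ : ℝ → X} (h : IsGeodesic x y γ) {t : ℝ}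
    (ht : t ∈ Icc (0 : ℝ) 1) : dist x (γ (t * dist x y)) = t * dist x y := by
  have := h.2.2 0 (left_mem_Icc.2 dist_nonneg) _ (mul_mem_Icc_dist ht x y)
  rw [h.1, zero_sub, abs_neg, abs_of_nonneg (mul_mem_Icc_dist ht x y).1] at this
  exact this

lemma IsGeodesic.dist_right {x y : X} {γ : ℝ → X} (h : IsGeodesic x y γ) {t : ℝ}
    (ht : t ∈ Icc (0 : ℝ) 1) : dist y (γ (t * dist x y)) = (1 - t) * dist x y := by
  have := h.2.2 _ (right_mem_Icc.2 dist_nonneg) _ (mul_mem_Icc_dist ht x y)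
  rw [h.2.1, abs_of_nonneg (sub_nonneg.2 (mul_mem_Icc_dist ht x y).2)] at this
  rw [this]; ring

lemma IsGeodesic.dist_le_of_left (hX : CAT0 X) {x y y' : X} {γ δ : ℝ → X}
    (hγ : IsGeodesic x y γ) (hδ : IsGeodesic x y' δ) {t : ℝ} (ht : t ∈ Icc (0 : ℝ) 1) :
    dist (γ (t * dist x y)) (δ (t * dist x y')) ≤ t * dist y y' := by
  have h1 := hX.2 x y (δ (t * dist x y')) γ hγ t ht
  -- `h1` bounds `d(γ_t, δ_t)²` through `d(y, δ_t)²`, which `h2` bounds in turn; in the sum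
  -- every term except `t² d(y, z)²`, with `z` the endpoint of `δ`, cancels.
  have h2 := hX.2 x y' y δ hδ t ht
  rw [hδ.dist_left ht] at h1
  rw [dist_comm _ y, dist_comm y' y] at h2
  have h3 := mul_le_mul_of_nonneg_left h2 ht.1
  refine le_of_sq_le_sq ?_ (mul_nonneg ht.1 dist_nonneg)
  linarith

lemma IsGeodesic.dist_le_of_right (hX : CAT0 X) {x x' y : X} {γ δ : ℝ → X}
    (hγ : IsGeodesic x y γ) (hδ : IsGeodesic x' y δ) {t : ℝ} (ht : t ∈ Icc (0 : ℝ) 1) :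
    dist (γ (t * dist x y)) (δ (t * dist x' y)) ≤ (1 - t) * dist x x' := by
  have h1 := hX.2 x y (δ (t * dist x' y)) γ hγ t ht
  have h2 := hX.2 x' y x δ hδ t ht
  rw [hδ.dist_right ht] at h1
  rw [dist_comm _ x, dist_comm x' x, dist_comm y x] at h2
  have h3 := mul_le_mul_of_nonneg_left h2 (sub_nonneg.2 ht.2)
  refine le_of_sq_le_sq ?_ (mul_nonneg (sub_nonneg.2 ht.2) dist_nonneg)
  linarith

/-- Convexity of the metric of a CAT(0) space, obtained by splitting the quadrilateral
`x, y, y', x'` along the diagonal `[x, y']`. -/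
lemma IsGeodesic.dist_le (hX : CAT0 X) {x y x' y' : X} {γ γ' : ℝ → X}
    (hγ : IsGeodesic x y γ) (hγ' : IsGeodesic x' y' γ') {t : ℝ} (ht : t ∈ Icc (0 : ℝ) 1) :
    dist (γ (t * dist x y)) (γ' (t * dist x' y')) ≤ (1 - t) * dist x x' + t * dist y y' := by
  obtain ⟨δ, hδ⟩ := hX.1 x y'
  have h1 := hγ.dist_le_of_left hX hδ ht
  have h2 := hδ.dist_le_of_right hX hγ' ht
  have h3 := dist_triangle (γ (t * dist x y)) (δ (t * dist x y')) (γ' (t * dist x' y'))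
  linarith

lemma mem_segs {x y p : X} :
    p ∈ segs x y ↔ ∃ γ, IsGeodesic x y γ ∧ ∃ s ∈ Icc (0 : ℝ) (dist x y), γ s = p := by
  simp [segs]

/-- A geodesic segment stays close to any segment whose endpoints are close to its own. -/
lemma exists_mem_segs_dist_lt (hX : CAT0 X) {x y a b p : X} {ε : ℝ} (hp : p ∈ segs x y)
    (hx : dist x a < ε) (hy : dist y b < ε) : ∃ q ∈ segs a b, dist p q < ε := by
  obtain ⟨γ, hγ, s, hs, rfl⟩ := mem_segs.1 hp
  obtain ⟨δ, hδ⟩ := hX.1 a b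
  obtain ⟨t, ht, rfl⟩ : ∃ t ∈ Icc (0 : ℝ) 1, t * dist x y = s := by
    rcases (dist_nonneg (x := x) (y := y)).eq_or_lt with h | h
    · rw [← h] at hs ⊢
      exact ⟨0, by simp, by linarith [hs.1, hs.2]⟩
    · exact ⟨s / dist x y, ⟨div_nonneg hs.1 h.le, (div_le_one h).2 hs.2⟩,
        div_mul_cancel₀ _ h.ne'⟩
  refine ⟨_, mem_segs.2 ⟨δ, hδ, _, mul_mem_Icc_dist ht a b, rfl⟩,
    (hγ.dist_le hX hδ ht).trans_lt ?_⟩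
  have := convex_Iio ε hx hy (sub_nonneg.2 ht.2) ht.1 (by ring)
  simpa using this

lemma gconvex_thickening (hX : CAT0 X) {C : Set X} (hC : GConvex C) (ε : ℝ) :
    GConvex (Metric.thickening ε C) := by
  intro x hx y hy p hp
  obtain ⟨a, ha, hxa⟩ := Metric.mem_thickening_iff.1 hx
  obtain ⟨b, hb, hyb⟩ := Metric.mem_thickening_iff.1 hy
  obtain ⟨q, hq, hpq⟩ := exists_mem_segs_dist_lt hX hp hxa hyb
  exact Metric.mem_thickening_iff.2 ⟨q, hC a ha b hb hq, hpq⟩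

lemma gconvex_gconvHull (S : Set X) : GConvex (gconvHull S) := by
  intro x hx y hy p hp C hC
  exact hC.1 x (hx C hC) y (hy C hC) hp

lemma subset_gconvHull (S : Set X) : S ⊆ gconvHull S :=
  fun _ hx _ hC => hC.2 hx

lemma totallyBounded_of_subset_thickening {S : Set X}
    (h : ∀ ε > 0, ∃ T, TotallyBounded T ∧ S ⊆ Metric.thickening ε T) : TotallyBounded S := by
  refine Metric.totallyBounded_iff.2 fun ε hε => ?_
  obtain ⟨T, hT, hST⟩ := h (ε / 2) (half_pos hε)
  obtain ⟨F, hF, hTF⟩ := Metric.totallyBounded_iff.1 hT (ε / 2) (half_pos hε)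
  refine ⟨F, hF, fun x hx => ?_⟩
  obtain ⟨y, hy, hxy⟩ := Metric.mem_thickening_iff.1 (hST hx)
  obtain ⟨z, hz, hyz⟩ := mem_iUnion₂.1 (hTF hy)
  rw [Metric.mem_ball] at hyz
  exact mem_iUnion₂.2 ⟨z, hz, Metric.mem_ball.2 (by linarith [dist_triangle x y z])⟩

/-- By convexity of the metric (with equal endpoints) the set `segs x y` is a single geodesic,
which is a continuous image of an interval. -/
lemma segs_totallyBounded (hX : CAT0 X) (x y : X) : TotallyBounded (segs x y) := by
  obtain ⟨γ, hγ⟩ := hX.1 x y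
  have hc : ContinuousOn γ (Icc 0 (dist x y)) := by
    have : LipschitzOnWith 1 γ (Icc 0 (dist x y)) :=
      LipschitzOnWith.of_dist_le_mul fun s hs t ht => by
        rw [hγ.2.2 s hs t ht, Real.dist_eq]; simp
    exact this.continuousOn
  refine (isCompact_Icc.image_of_continuousOn hc).totallyBounded.subset ?_
  intro p hp
  obtain ⟨δ, hδ, s, hs, rfl⟩ := mem_segs.1 hp
  refine ⟨s, hs, ?_⟩
  rcases (dist_nonneg (x := x) (y := y)).eq_or_lt with h | h
  · obtain rfl : s = 0 := by rw [← h] at hs; exact le_antisymm hs.2 hs.1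
    rw [hγ.1, hδ.1]
  · have h1 := hγ.dist_le hX hδ (t := s / dist x y)
      ⟨div_nonneg hs.1 h.le, (div_le_one h).2 hs.2⟩
    rw [div_mul_cancel₀ _ h.ne', dist_self, dist_self, mul_zero, mul_zero, add_zero] at h1
    exact dist_le_zero.1 h1

lemma thr_totallyBounded (hX : CAT0 X) {S : Set X} (hS : TotallyBounded S) :
    TotallyBounded (thr S) := by
  refine totallyBounded_of_subset_thickening fun ε hε => ?_
  obtain ⟨F, hF, hSF⟩ := Metric.totallyBounded_iff.1 hS ε hε
  refine ⟨thr F, ?_, fun p hp => ?_⟩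
  · exact (totallyBounded_biUnion hF).2 fun x _ =>
      (totallyBounded_biUnion hF).2 fun y _ => segs_totallyBounded hX x y
  · simp only [thr, mem_iUnion] at hp
    obtain ⟨x, hx, y, hy, hp⟩ := hp
    obtain ⟨a, ha, hxa⟩ := mem_iUnion₂.1 (hSF hx)
    obtain ⟨b, hb, hyb⟩ := mem_iUnion₂.1 (hSF hy)
    obtain ⟨q, hq, hpq⟩ := exists_mem_segs_dist_lt hX hp hxa hyb
    exact Metric.mem_thickening_iff.2
      ⟨q, mem_iUnion₂.2 ⟨a, ha, mem_iUnion₂.2 ⟨b, hb, hq⟩⟩, hpq⟩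

lemma gconvHull_totallyBounded_of_finite (hX : CAT0 X) {S : Set X} (hS : S.Finite)
    (hdeg : thrDeg S < ⊤) : TotallyBounded (gconvHull S) := by
  obtain ⟨_, ⟨n, hn, rfl⟩, -⟩ := sInf_lt_iff.1 hdeg
  rw [← show thr^[n] S = gconvHull S from hn]
  clear hn
  induction n with
  | zero => exact hS.totallyBounded
  | succ n ih => rw [Function.iterate_succ_apply']; exact thr_totallyBounded hX ih

end CAT0Hull

/-- If every finite set has finite threading degree, then the closed convex hull of
every compact set is compact. -/
theorem closure_convHull_compact_of_finite_sets {X : Type*} [MetricSpace X] [CompleteSpace X]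
    (hX : CAT0 X) (hfin : ∀ S : Set X, S.Finite → thrDeg S < ⊤)
    (K : Set X) (hK : IsCompact K) :
    IsCompact (closure (gconvHull K)) := by
  refine isCompact_iff_totallyBounded_isComplete.2
    ⟨TotallyBounded.closure ?_, isClosed_closure.isComplete⟩
  refine totallyBounded_of_subset_thickening fun ε hε => ?_
  obtain ⟨S, hS, hKS⟩ := Metric.totallyBounded_iff.1 hK.totallyBounded ε hε
  refine ⟨gconvHull S, gconvHull_totallyBounded_of_finite hX hS (hfin S hS), ?_⟩
  refine sInter_subset_of_mem ⟨gconvex_thickening hX (gconvex_gconvHull S) ε, fun x hx => ?_⟩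
  obtain ⟨a, ha, hxa⟩ := mem_iUnion₂.1 (hKS hx)
  exact Metric.mem_thickening_iff.2 ⟨a, subset_gconvHull S ha, hxa⟩
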